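/- For the k-server problem on [0,1]: the request sequence consisting of m = n/(2k) repetitions of (1/(2k), 2/(2k), ..., 2k/(2k)) forces any solution with k servers to incur total cost at least n/(4k). -/

import Mathlib

/-!
In one round the `2k` requested points `1/(2k), …, 2k/(2k)` come in increasing order. A single server
that serves `c ≥ 1` of them travels at least `(c - 1)/(2k)` within the round, because distinct points
are `1/(2k)` apart (`card_visits_le`). Summing over the `k` servers, which together serve all `2k`
requests, a round costs at least `(2k - k)/(2k) = 1/2` (`round_cost`), so `m` rounds cost at
least `m/2 = n/(4k)`.
-/

/-- A path whose value at time `s + 1` equals `s + 1` for `c` of the times `s < N` has length at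
least `c - 1`. The second alternative of the conclusion strengthens this so that induction on `N`
works: it records the last such value `l` and the distance the path has moved away from it since. -/
lemma card_visits_aux (x : ℕ → ℝ) (N : ℕ) :
    ((Finset.range N).filter (fun s => x (s + 1) = (s : ℝ) + 1)).card = 0 ∨
    ∃ l : ℝ, l ≤ N ∧
      (((Finset.range N).filter (fun s => x (s + 1) = (s : ℝ) + 1)).card : ℝ) + |x N - l| ≤
        1 + ∑ s ∈ Finset.range N, |x (s + 1) - x s| := by
  induction N with
  | zero => left; simp
  | succ N ih =>
    rw [Finset.sum_range_succ, Finset.range_add_one, Finset.filter_insert]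
    split_ifs with h
    · right
      refine ⟨(N : ℝ) + 1, by push_cast; exact le_rfl, ?_⟩
      rw [Finset.card_insert_of_notMem (by simp)]
      have hnn : 0 ≤ ∑ s ∈ Finset.range N, |x (s + 1) - x s| :=
        Finset.sum_nonneg fun _ _ => abs_nonneg _
      rw [h, sub_self, abs_zero]
      push_cast
      rcases ih with h0 | ⟨l, hl, hc⟩
      · rw [h0]
        have := abs_nonneg ((N : ℝ) + 1 - x N)
        push_cast
        linarith
      · -- going from `l ≤ N` to `N + 1` via `x N` costs at least `1`
        have h1 := le_abs_self ((N : ℝ) + 1 - x N)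
        have h2 := le_abs_self (x N - l)
        linarith
    · rcases ih with h0 | ⟨l, hl, hc⟩
      · left; exact h0
      · right
        refine ⟨l, by push_cast; linarith, ?_⟩
        have := abs_sub_le (x (N + 1)) (x N) l
        linarith

lemma card_visits_le (x : ℕ → ℝ) (N : ℕ) :
    (((Finset.range N).filter (fun s => x (s + 1) = (s : ℝ) + 1)).card : ℝ) ≤
      1 + ∑ s ∈ Finset.range N, |x (s + 1) - x s| := by
  rcases card_visits_aux x N with h0 | ⟨l, -, hc⟩
  · have hnn : 0 ≤ ∑ s ∈ Finset.range N, |x (s + 1) - x s| :=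
      Finset.sum_nonneg fun _ _ => abs_nonneg _
    rw [h0]
    push_cast
    linarith
  · have := abs_nonneg (x N - l)
    linarith

/-- A single round costs at least `1/2`, whatever the initial positions of the servers. -/
lemma round_cost (k : ℕ) (hk : 0 < k) (P : ℕ → Fin k → ℝ)
    (hP : ∀ s < 2 * k, ∃ j, P (s + 1) j = ((s : ℝ) + 1) / (2 * k)) :
    1 / 2 ≤ ∑ s ∈ Finset.range (2 * k), ∑ j, |P (s + 1) j - P s j| := by
  have hk' : (0 : ℝ) < k := by exact_mod_cast hk
  -- rescale by `2k`, so that the requested points become the integers `1, …, 2k`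
  set A : Fin k → Finset ℕ := fun j =>
    (Finset.range (2 * k)).filter (fun s => 2 * (k : ℝ) * P (s + 1) j = (s : ℝ) + 1) with hA
  have hcov : Finset.range (2 * k) ⊆ Finset.univ.biUnion A := by
    intro s hs
    obtain ⟨j, hj⟩ := hP s (Finset.mem_range.mp hs)
    simp only [Finset.mem_biUnion, Finset.mem_univ, true_and, hA, Finset.mem_filter]
    exact ⟨j, hs, by rw [hj]; field_simp⟩
  have hcard : 2 * k ≤ ∑ j, (A j).card := by
    simpa using (Finset.card_le_card hcov).trans Finset.card_biUnion_le
  have hcard' : 2 * (k : ℝ) ≤ ∑ j, ((A j).card : ℝ) := by exact_mod_cast hcard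
  have hsum : ∑ j, ((A j).card : ℝ) ≤
      ∑ j, (1 + 2 * (k : ℝ) * ∑ s ∈ Finset.range (2 * k), |P (s + 1) j - P s j|) := by
    refine Finset.sum_le_sum fun j _ => ?_
    refine (card_visits_le (fun t => 2 * (k : ℝ) * P t j) (2 * k)).trans_eq ?_
    simp only [← mul_sub, abs_mul, Finset.mul_sum, abs_of_pos hk', abs_two]
  rw [Finset.sum_add_distrib, ← Finset.mul_sum, Finset.sum_comm] at hsum
  simp only [Finset.sum_const, Finset.card_univ, Fintype.card_fin, nsmul_eq_mul, mul_one] at hsum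
  have h := hcard'.trans hsum
  by_contra! hlt
  nlinarith

lemma rounds_cost (k : ℕ) (hk : 0 < k) (P : ℕ → Fin k → ℝ) (m : ℕ)
    (hP : ∀ i < 2 * k * m, ∃ j, P (i + 1) j = ((i % (2 * k) + 1 : ℕ) : ℝ) / (2 * k)) :
    (m : ℝ) / 2 ≤ ∑ i ∈ Finset.range (2 * k * m), ∑ j, |P (i + 1) j - P i j| := by
  induction m with
  | zero => simp
  | succ m ih =>
    have hm : 2 * k * (m + 1) = 2 * k * m + 2 * k := by ring
    rw [hm] at hP ⊢
    rw [Finset.sum_range_add]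
    have h1 := ih fun i hi => hP i (by omega)
    have h2 := round_cost k hk (fun s => P (2 * k * m + s)) fun s hs => by
      obtain ⟨j, hj⟩ := hP (2 * k * m + s) (by omega)
      refine ⟨j, ?_⟩
      rw [Nat.mul_add_mod, Nat.mod_eq_of_lt hs] at hj
      rw [← add_assoc, hj]
      push_cast
      rfl
    simp only [← add_assoc] at h2
    push_cast
    linarith

/-- For the `k`-server problem on `[0,1]` with servers initially at `0`,
the request sequence consisting of `m` repetitions of `(1/(2k), 2/(2k), …, 2k/(2k))`
(of total length `n = 2km`) forces total movement cost at least `n / (4k)`. -/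
theorem k_server_lower_bound (k m : ℕ) (hk : 0 < k)
    (p : Fin (2 * k * m + 1) → Fin k → ℝ)
    (hstart : ∀ j : Fin k, p 0 j = 0)
    (hserve : ∀ i : Fin (2 * k * m), ∃ j : Fin k,
      p i.succ j = (((i : ℕ) % (2 * k) + 1 : ℕ) : ℝ) / (2 * k)) :
    ((2 * k * m : ℕ) : ℝ) / (4 * k) ≤
      ∑ i : Fin (2 * k * m), ∑ j : Fin k, |p i.succ j - p i.castSucc j| := by
  have hk' : (0 : ℝ) < k := by exact_mod_cast hk
  -- extend `p` to all times; the values after the last request are irrelevant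
  let P : ℕ → Fin k → ℝ := fun t j => if h : t < 2 * k * m + 1 then p ⟨t, h⟩ j else 0
  have hsucc : ∀ (i : Fin (2 * k * m)) j, P (i + 1) j = p i.succ j := fun i j =>
    dif_pos (Nat.succ_lt_succ i.isLt)
  have hcast : ∀ (i : Fin (2 * k * m)) j, P i j = p i.castSucc j := fun i j =>
    dif_pos (Nat.lt_succ_of_lt i.isLt)
  have h := rounds_cost k hk P m fun i hi => by
    obtain ⟨j, hj⟩ := hserve ⟨i, hi⟩
    exact ⟨j, (hsucc ⟨i, hi⟩ j).trans hj⟩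
  rw [Finset.sum_range] at h
  simp only [hsucc, hcast] at h
  refine le_trans (le_of_eq ?_) h
  push_cast
  field_simp
  ring
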